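/- arXiv:math/0406013 — 3 statements merged into one kernel-verified Lean document; each statement's English description precedes it below -/
import Mathlib

section
/- Let m ≥ 2, let F_m be a free group with free basis A of size m, and let φ : F_m → ℤ be a surjective homomorphism. Let a ∈ A ∪ A^{-1} be a letter with φ(a) maximal among all letters of A ∪ A^{-1}. Then for every k ≥ 4, the number d_k of good words of length k satisfies d_k ≥ 4m(m-1)²(2m-1)^{k-4}. -/
open Filter Topology

/-- A word over the alphabet `A^{±1}` (a letter is a pair `(i, b)`, where `b = true`
means the generator `i` and `b = false` means its inverse) is freely reduced iff
it is its own free reduction. -/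
def IsReducedWord {m : ℕ} (w : List (Fin m × Bool)) : Prop :=
  FreeGroup.reduce w = w

/-- A *good* word w.r.t. `φ : F_m → ℤ` and the letter `a`: it is freely reduced,
its first letter is `a`, its last letter is not `a⁻¹`, and its `φ`-value is positive. -/
def IsGoodWord {m : ℕ} (φ : FreeGroup (Fin m) → ℤ) (a : Fin m × Bool)
    (w : List (Fin m × Bool)) : Prop :=
  IsReducedWord w ∧ w.head? = some a ∧ w.getLast? ≠ some (a.1, !a.2) ∧
    0 < φ (FreeGroup.mk w)

/-!
Let `w = a t` be a word for which `a t a` is reduced; then `w` is reduced and does not end in `a⁻¹`.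
Split off the maximal powers of `a` at both ends, `t = aⁱ u aʲ`. Replacing `u` by `u⁻¹` gives a
word `t'` of the same kind and of the same length, and `t'' = t`. As the values of `u` and `u⁻¹`
cancel, `φ(a t) + φ(a t') = 2 (i + j + 1) φ(a)`. Once `φ(a)` is positive, at least one of `a t` and
`a t'` therefore has a positive value, so at least half of these words are good. Choosing letters
one by one shows that there are at least `2(m-1)(2m-1)^(k-2)` of them, and `4m(m-1) ≤ (2m-1)²`.
-/

namespace GoodWords

open List
open FreeGroup (invRev)

section Words

variable {α : Type*} {a x y z : α × Bool} {t u : List (α × Bool)}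

/-- The formal inverse of a letter; `(i, true)` stands for the generator `i` and `(i, false)` for
its inverse. -/
def invLetter (x : α × Bool) : α × Bool := (x.1, !x.2)

@[simp]
lemma invLetter_invLetter (x : α × Bool) : invLetter (invLetter x) = x := by
  simp [invLetter]

lemma invLetter_ne (x : α × Bool) : invLetter x ≠ x := by
  simp [invLetter, Prod.ext_iff]

lemma eq_invLetter_comm : x = invLetter y ↔ y = invLetter x := by
  constructor <;> rintro rfl <;> simp

lemma map_invLetter_eq_some_iff {o : Option (α × Bool)} :
    o.map invLetter = some a ↔ o = some (invLetter a) := by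
  rw [Option.map_eq_some_iff]
  grind [invLetter_invLetter]

lemma isReduced_iff_isChain :
    FreeGroup.IsReduced t ↔ t.IsChain fun x y ↦ y ≠ invLetter x := by
  have compat (x y : α × Bool) : (x.1 = y.1 → x.2 = y.2) ↔ y ≠ invLetter x := by
    rw [invLetter, ne_eq, Prod.ext_iff, Bool.eq_not, not_and, not_not, eq_comm, eq_comm (a := x.2)]
  simp only [FreeGroup.IsReduced, compat]

lemma isReduced_invRev (hu : FreeGroup.IsReduced u) : FreeGroup.IsReduced (invRev u) := by
  classical
  rw [FreeGroup.isReduced_iff_reduce_eq, FreeGroup.reduce_invRev, hu.reduce_eq]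

lemma head?_invRev (u : List (α × Bool)) : (invRev u).head? = u.getLast?.map invLetter := by
  rw [invRev, head?_reverse, getLast?_map]
  rfl

lemma getLast?_invRev (u : List (α × Bool)) : (invRev u).getLast? = u.head?.map invLetter := by
  rw [invRev, getLast?_reverse, head?_map]
  rfl

lemma mk_replicate (a : α × Bool) (n : ℕ) :
    FreeGroup.mk (replicate n a) = FreeGroup.mk [a] ^ n := by
  induction n with
  | zero => rfl
  | succ n ih => rw [pow_succ', ← ih, FreeGroup.mul_mk, replicate_succ, singleton_append]

/-- The word `x t y` is freely reduced, where `x` and `y` are letters. -/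
def IsReducedBetween (x y : α × Bool) (t : List (α × Bool)) : Prop :=
  FreeGroup.IsReduced (x :: (t ++ [y]))

lemma IsReducedBetween.isReduced_cons (h : IsReducedBetween x y t) :
    FreeGroup.IsReduced (x :: t) :=
  h.infix (prefix_append (x :: t) [y]).isInfix

lemma IsReducedBetween.getLast?_cons_ne (h : IsReducedBetween x y t) :
    (x :: t).getLast? ≠ some (invLetter y) := fun hlast ↦
  have hjoin := (isChain_append (l₁ := x :: t)).1 (isReduced_iff_isChain.1 h) |>.2.2
  hjoin _ hlast y rfl (invLetter_invLetter y).symm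

lemma isReducedBetween_nil : IsReducedBetween x y [] ↔ y ≠ invLetter x := by
  simp [IsReducedBetween, isReduced_iff_isChain]

lemma isReducedBetween_cons :
    IsReducedBetween x y (z :: t) ↔ z ≠ invLetter x ∧ IsReducedBetween z y t := by
  simp [IsReducedBetween, isReduced_iff_isChain]

lemma isReducedBetween_concat :
    IsReducedBetween x y (t ++ [z]) ↔ IsReducedBetween x z t ∧ y ≠ invLetter z := by
  induction t generalizing x with
  | nil => simp [isReducedBetween_nil, isReducedBetween_cons]
  | cons s t ih => rw [cons_append, isReducedBetween_cons, isReducedBetween_cons, ih, and_assoc]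

lemma isReducedBetween_self_iff : IsReducedBetween a a u ↔
    FreeGroup.IsReduced u ∧ u.head? ≠ some (invLetter a) ∧ u.getLast? ≠ some (invLetter a) := by
  have hne := (invLetter_ne a).symm
  cases u with
  | nil => simpa [isReducedBetween_nil]
  | cons x t =>
    simp only [IsReducedBetween, isReduced_iff_isChain, isChain_cons, isChain_append]
    grind [invLetter_invLetter]

lemma isReducedBetween_replicate_append_replicate (i j : ℕ) :
    IsReducedBetween a a (replicate i a ++ u ++ replicate j a) ↔ IsReducedBetween a a u := by
  have hne := (invLetter_ne a).symm
  induction i with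
  | zero =>
    induction j with
    | zero => simp
    | succ j ih => rwa [replicate_succ', ← append_assoc, isReducedBetween_concat, and_iff_left hne]
  | succ i ih =>
    rwa [replicate_succ, cons_append, cons_append, isReducedBetween_cons, and_iff_right hne]

lemma isReducedBetween_invRev (hu : IsReducedBetween a a u) (h₀ : u.head? ≠ some a)
    (h₁ : u.getLast? ≠ some a) : IsReducedBetween a a (invRev u) := by
  rw [isReducedBetween_self_iff] at hu ⊢
  simp only [head?_invRev, getLast?_invRev, ne_eq, map_invLetter_eq_some_iff, invLetter_invLetter]
  exact ⟨isReduced_invRev hu.1, h₁, h₀⟩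

end Words

section Core

variable {β : Type*} {a : β} {v : List β}

lemma exists_eq_replicate_append (a : β) (t : List β) :
    ∃ (i : ℕ) (v : List β), t = replicate i a ++ v ∧ v.head? ≠ some a := by
  induction t with
  | nil => exact ⟨0, [], by simp⟩
  | cons x t ih =>
    obtain ⟨i, v, rfl, hv⟩ := ih
    by_cases hx : x = a
    · exact ⟨i + 1, v, by simp [hx, replicate_succ], hv⟩
    · exact ⟨0, x :: (replicate i a ++ v), by simp, by simpa⟩

lemma exists_eq_replicate_append_replicate (a : β) (t : List β) :
    ∃ (i : ℕ) (u : List β) (j : ℕ),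
      t = replicate i a ++ u ++ replicate j a ∧ u.head? ≠ some a ∧ u.getLast? ≠ some a := by
  obtain ⟨i, v, rfl, hv⟩ := exists_eq_replicate_append a t
  obtain ⟨j, u, hu, hu'⟩ := exists_eq_replicate_append a v.reverse
  obtain rfl : v = u.reverse ++ replicate j a := by
    rw [← reverse_reverse v, hu, reverse_append, reverse_replicate]
  refine ⟨i, u.reverse, j, by rw [append_assoc], ?_, by rwa [getLast?_reverse]⟩
  cases h : u.reverse with
  | nil => simp
  | cons x w => simpa [h] using hv

variable [BEq β] [LawfulBEq β]

lemma dropWhile_replicate_append (i : ℕ) (h : v.head? ≠ some a) :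
    (replicate i a ++ v).dropWhile (· == a) = v := by
  rw [dropWhile_append_of_pos (by simp), dropWhile_beq_eq_self_of_head?_ne h]

lemma takeWhile_replicate_append (i : ℕ) (h : v.head? ≠ some a) :
    (replicate i a ++ v).takeWhile (· == a) = replicate i a := by
  rw [takeWhile_append_of_pos (by simp)]
  cases v <;> simp_all

lemma rdropWhile_append_replicate (i : ℕ) (h : v.getLast? ≠ some a) :
    (v ++ replicate i a).rdropWhile (· == a) = v := by
  rw [rdropWhile, reverse_append, reverse_replicate,
    dropWhile_replicate_append i (by rwa [head?_reverse]), reverse_reverse]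

lemma rtakeWhile_append_replicate (i : ℕ) (h : v.getLast? ≠ some a) :
    (v ++ replicate i a).rtakeWhile (· == a) = replicate i a := by
  rw [rtakeWhile, reverse_append, reverse_replicate,
    takeWhile_replicate_append i (by rwa [head?_reverse]), reverse_replicate]

end Core

section InvertCore

variable {α : Type*} [DecidableEq α] {a : α × Bool} {t u : List (α × Bool)}

/-- The involution `aⁱ u aʲ ↦ aⁱ u⁻¹ aʲ` of the counting argument, where the core `u` neither
starts nor ends with the letter `a`. -/
def invertCore (a : α × Bool) (t : List (α × Bool)) : List (α × Bool) :=
  let v := t.dropWhile (· == a)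
  t.takeWhile (· == a) ++ invRev (v.rdropWhile (· == a)) ++ v.rtakeWhile (· == a)

lemma invertCore_replicate_append_replicate (i j : ℕ) (h₀ : u.head? ≠ some a)
    (h₁ : u.getLast? ≠ some a) :
    invertCore a (replicate i a ++ u ++ replicate j a) =
      replicate i a ++ invRev u ++ replicate j a := by
  rcases eq_or_ne u [] with rfl | hu
  · simp [invertCore]
  · have h₀' : (u ++ replicate j a).head? ≠ some a := by rwa [head?_append_of_ne_nil _ hu]
    simp only [invertCore, append_assoc (replicate i a) u, dropWhile_replicate_append i h₀',
      takeWhile_replicate_append i h₀', rdropWhile_append_replicate j h₁,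
      rtakeWhile_append_replicate j h₁]

lemma length_invertCore (a : α × Bool) (t : List (α × Bool)) :
    (invertCore a t).length = t.length := by
  obtain ⟨i, u, j, rfl, h₀, h₁⟩ := exists_eq_replicate_append_replicate a t
  rw [invertCore_replicate_append_replicate i j h₀ h₁]
  simp only [length_append, FreeGroup.invRev_length]

lemma isReducedBetween_invertCore (ht : IsReducedBetween a a t) :
    IsReducedBetween a a (invertCore a t) := by
  obtain ⟨i, u, j, rfl, h₀, h₁⟩ := exists_eq_replicate_append_replicate a t
  rw [isReducedBetween_replicate_append_replicate] at ht
  rw [invertCore_replicate_append_replicate i j h₀ h₁, isReducedBetween_replicate_append_replicate]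
  exact isReducedBetween_invRev ht h₀ h₁

lemma invertCore_invertCore (ht : IsReducedBetween a a t) :
    invertCore a (invertCore a t) = t := by
  obtain ⟨i, u, j, rfl, h₀, h₁⟩ := exists_eq_replicate_append_replicate a t
  rw [isReducedBetween_replicate_append_replicate, isReducedBetween_self_iff] at ht
  obtain ⟨-, h₀', h₁'⟩ := ht
  rw [invertCore_replicate_append_replicate i j h₀ h₁, invertCore_replicate_append_replicate i j,
    FreeGroup.invRev_invRev]
  · rwa [head?_invRev, ne_eq, map_invLetter_eq_some_iff]
  · rwa [getLast?_invRev, ne_eq, map_invLetter_eq_some_iff]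

lemma exists_map_mk_invertCore_mul_eq_pow {G : Type*} [CommGroup G] (φ : FreeGroup α →* G)
    (a : α × Bool) (t : List (α × Bool)) :
    ∃ n : ℕ, φ (.mk (invertCore a t)) * φ (.mk t) = φ (.mk [a]) ^ n := by
  obtain ⟨i, u, j, rfl, h₀, h₁⟩ := exists_eq_replicate_append_replicate a t
  use 2 * (i + j)
  simp only [invertCore_replicate_append_replicate i j h₀ h₁, ← FreeGroup.mul_mk,
    ← FreeGroup.inv_mk, mk_replicate, map_mul, _root_.map_pow, map_inv]
  rw [mul_right_comm _ _⁻¹, mul_right_comm _ (φ (.mk u)), mul_mul_mul_comm, inv_mul_cancel, mul_one,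
    ← pow_add, ← sq, ← pow_mul']

lemma one_lt_map_mk_cons_or {G : Type*} [CommGroup G] [LinearOrder G] [IsOrderedMonoid G]
    {φ : FreeGroup α →* G} (ha : 1 < φ (.mk [a])) (t : List (α × Bool)) :
    1 < φ (.mk (a :: t)) ∨ 1 < φ (.mk (a :: invertCore a t)) := by
  obtain ⟨n, hn⟩ := exists_map_mk_invertCore_mul_eq_pow φ a t
  have map_cons (t) : φ (.mk (a :: t)) = φ (.mk [a]) * φ (.mk t) := by
    rw [← map_mul, FreeGroup.mul_mk, singleton_append]
  have hprod : 1 < φ (.mk (a :: t)) * φ (.mk (a :: invertCore a t)) := by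
    calc 1
      _ < φ (.mk [a]) ^ (n + 2) := one_lt_pow' ha (by omega)
      _ = _ := by rw [map_cons t, map_cons (invertCore a t), pow_add, ← hn, sq]; ac_rfl
  by_contra! hle
  exact hprod.not_ge (mul_le_one' hle.1 hle.2)

end InvertCore

section Counting

lemma ncard_le_two_mul_ncard_inter {β : Type*} {s p : Set β} {f : β → β} (hs : s.Finite)
    (hf : s.MapsTo f s) (hinj : s.InjOn f) (h : ∀ x ∈ s, x ∈ p ∨ f x ∈ p) :
    s.ncard ≤ 2 * (s ∩ p).ncard := by
  have hle : (s \ p).ncard ≤ (s ∩ p).ncard :=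
    Set.ncard_le_ncard_of_injOn f (fun x hx ↦ ⟨hf hx.1, (h x hx.1).resolve_left hx.2⟩)
      (hinj.mono Set.sdiff_subset) (hs.inter_of_left p)
  have hadd := Set.ncard_inter_add_ncard_sdiff_eq_ncard s p hs
  omega

lemma finite_setOf_length_eq_and {β : Type*} [Finite β] (n : ℕ) (p : List β → Prop) :
    {t | t.length = n ∧ p t}.Finite :=
  (finite_length_eq _ n).subset fun _ ht ↦ ht.1

variable {α : Type*} [Fintype α]

lemma sum_ncard_isReducedBetween_le [DecidableEq α] (x y : α × Bool) (n : ℕ) :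
    ∑ z ∈ Finset.univ.erase (invLetter x), {t | t.length = n ∧ IsReducedBetween z y t}.ncard ≤
      {t | t.length = n + 1 ∧ IsReducedBetween x y t}.ncard := by
  let next := Finset.univ.erase (invLetter x)
  let S (z : α × Bool) := {t | t.length = n ∧ IsReducedBetween z y t}
  have disjoint : (next : Set (α × Bool)).PairwiseDisjoint fun z ↦ cons z '' S z := by
    intro z _ w _ hzw
    simp only [Function.onFun, Set.disjoint_left]
    grind
  calc ∑ z ∈ next, (S z).ncard
    _ = ∑ z ∈ next, (cons z '' S z).ncard := by
      simp only [Set.ncard_image_of_injective _ cons_injective]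
    _ = (⋃ z ∈ (next : Set (α × Bool)), cons z '' S z).ncard := by
      rw [← finsum_mem_coe_finset, Set.Finite.ncard_biUnion next.finite_toSet
        (fun z _ ↦ (finite_setOf_length_eq_and _ _).image _) disjoint]
    _ ≤ _ := by
      refine Set.ncard_le_ncard ?_ (finite_setOf_length_eq_and _ _)
      simp only [Set.iUnion_subset_iff, Set.image_subset_iff]
      rintro z hz t ⟨ht, hr⟩
      exact ⟨congrArg (· + 1) ht, isReducedBetween_cons.2 ⟨Finset.ne_of_mem_erase hz, hr⟩⟩

lemma le_ncard_isReducedBetween (x y : α × Bool) (n : ℕ) :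
    2 * (Fintype.card α - 1) * (2 * Fintype.card α - 1) ^ n ≤
      {t | t.length = n + 1 ∧ IsReducedBetween x y t}.ncard := by
  classical
  have card_letters : (Finset.univ : Finset (α × Bool)).card = 2 * Fintype.card α := by
    simp [mul_comm]
  induction n generalizing x with
  | zero =>
    calc 2 * (Fintype.card α - 1) * (2 * Fintype.card α - 1) ^ 0
      _ ≤ (Finset.univ \ {invLetter x, invLetter y} : Finset (α × Bool)).card := by
        have := Finset.le_card_sdiff {invLetter x, invLetter y} (Finset.univ : Finset (α × Bool))
        grind [Finset.card_le_two]
      _ ≤ _ := by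
        rw [← Set.ncard_coe_finset]
        refine Set.ncard_le_ncard_of_injOn (fun z ↦ [z]) (fun z hz ↦ ?_) (by simp [Set.InjOn])
          (finite_setOf_length_eq_and _ _)
        simpa [isReducedBetween_cons, isReducedBetween_nil, eq_invLetter_comm (x := y)] using hz
  | succ n ih =>
    calc 2 * (Fintype.card α - 1) * (2 * Fintype.card α - 1) ^ (n + 1)
      _ = ∑ z ∈ Finset.univ.erase (invLetter x),
          2 * (Fintype.card α - 1) * (2 * Fintype.card α - 1) ^ n := by
        rw [Finset.sum_const, Finset.card_erase_of_mem (Finset.mem_univ _), card_letters,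
          smul_eq_mul]
        ring
      _ ≤ ∑ z ∈ Finset.univ.erase (invLetter x),
          {t | t.length = n + 1 ∧ IsReducedBetween z y t}.ncard := by
        gcongr with z
        exact ih z
      _ ≤ _ := sum_ncard_isReducedBetween_le x y (n + 1)

end Counting

lemma one_lt_map_mk_of_forall_le {α G : Type*} [CommGroup G] [LinearOrder G] [IsOrderedMonoid G]
    {φ : FreeGroup α →* G} (hφ : φ ≠ 1) {a : α × Bool}
    (ha : ∀ x, φ (.mk [x]) ≤ φ (.mk [a])) : 1 < φ (.mk [a]) := by
  by_contra! h
  refine hφ (FreeGroup.ext_hom _ _ fun i ↦ le_antisymm ((ha (i, true)).trans h) ?_)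
  have hinv := (ha (i, false)).trans h
  rwa [← one_le_inv', ← map_inv, FreeGroup.inv_mk] at hinv

lemma four_mul_sq_mul_pow_le (m : ℕ) {k : ℕ} (hk : 4 ≤ k) :
    4 * m * (m - 1) ^ 2 * (2 * m - 1) ^ (k - 4) ≤ (m - 1) * (2 * m - 1) ^ (k - 2) := by
  obtain ⟨n, rfl⟩ := Nat.exists_eq_add_of_le' hk
  rcases m with - | m
  · simp
  · calc 4 * (m + 1) * m ^ 2 * (2 * m + 1) ^ n
      _ = m * (4 * m * (m + 1) * (2 * m + 1) ^ n) := by ring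
      _ ≤ m * ((2 * m + 1) ^ 2 * (2 * m + 1) ^ n) := by gcongr; nlinarith
      _ = m * (2 * m + 1) ^ (n + 2) := by ring

end GoodWords

open GoodWords in
theorem good_words_count_lower_bound_general {α G : Type*} [Fintype α] [CommGroup G]
    [LinearOrder G] [IsOrderedMonoid G] (φ : FreeGroup α →* G) {a : α × Bool}
    (ha : 1 < φ (.mk [a])) {k : ℕ} (hk : 2 ≤ k) :
    (Fintype.card α - 1) * (2 * Fintype.card α - 1) ^ (k - 2) ≤
      {w | w.length = k ∧ FreeGroup.IsReduced w ∧ w.head? = some a ∧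
        w.getLast? ≠ some (a.1, !a.2) ∧ 1 < φ (.mk w)}.ncard := by
  classical
  obtain ⟨n, rfl⟩ := Nat.exists_eq_add_of_le' hk
  let S := {t | t.length = n + 1 ∧ IsReducedBetween a a t}
  let P := {t | 1 < φ (.mk (a :: t))}
  have half_positive : S.ncard ≤ 2 * (S ∩ P).ncard :=
    ncard_le_two_mul_ncard_inter (f := invertCore a) (finite_setOf_length_eq_and _ _)
      (fun t ht ↦ ⟨(length_invertCore a t).trans ht.1, isReducedBetween_invertCore ht.2⟩)
      (Set.LeftInvOn.injOn fun _ ht ↦ invertCore_invertCore ht.2)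
      (fun t _ ↦ one_lt_map_mk_cons_or ha t)
  have card_S := le_ncard_isReducedBetween a a n
  calc (Fintype.card α - 1) * (2 * Fintype.card α - 1) ^ n
    _ ≤ (S ∩ P).ncard := by
      rw [mul_assoc] at card_S
      exact Nat.le_of_mul_le_mul_left (card_S.trans half_positive) two_pos
    _ ≤ _ := by
      refine Set.ncard_le_ncard_of_injOn (List.cons a) ?_ List.cons_injective.injOn
        (finite_setOf_length_eq_and _ _)
      rintro t ⟨⟨hlength, hreduced⟩, hpos⟩
      exact ⟨congrArg (· + 1) hlength, hreduced.isReduced_cons, rfl, hreduced.getLast?_cons_ne,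
        hpos⟩

/-- Lemma 1, first part. Let `m ≥ 2`, let `F_m` be the free group with
free basis `A` of size `m` and let `φ : F_m → ℤ` be a surjective homomorphism. If the letter
`a ∈ A^{±1}` has maximal `φ`-value among all letters, then for every `k ≥ 4` the number `d_k`
of good words of length `k` satisfies `d_k ≥ 4m(m-1)²(2m-1)^(k-4)`. -/
theorem good_words_count_lower_bound (m k : ℕ) (hm : 2 ≤ m) (hk : 4 ≤ k)
    (φ : FreeGroup (Fin m) → ℤ)
    (hφ : ∀ x y : FreeGroup (Fin m), φ (x * y) = φ x + φ y)
    (hsurj : Function.Surjective φ)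
    (a : Fin m × Bool)
    (ha : ∀ ℓ : Fin m × Bool, φ (FreeGroup.mk [ℓ]) ≤ φ (FreeGroup.mk [a])) :
    4 * m * (m - 1) ^ 2 * (2 * m - 1) ^ (k - 4) ≤
      Set.ncard {w : List (Fin m × Bool) | w.length = k ∧ IsGoodWord φ a w} := by
  let ψ : FreeGroup (Fin m) →* Multiplicative ℤ := .mk' (fun x ↦ .ofAdd (φ x)) hφ
  have hψ : ψ ≠ 1 := by
    obtain ⟨x, hx⟩ := hsurj 1
    exact fun h ↦ one_ne_zero (hx.symm.trans (DFunLike.congr_fun h x))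
  refine (GoodWords.four_mul_sq_mul_pow_le m hk).trans ?_
  have hlb := good_words_count_lower_bound_general ψ
    (GoodWords.one_lt_map_mk_of_forall_le hψ ha) (show 2 ≤ k by omega)
  simp only [Fintype.card_fin, FreeGroup.isReduced_iff_reduce_eq] at hlb
  exact hlb
end

section
/- Let m ≥ 2, let F_m be a free group with free basis A of size m, and let φ : F_m → ℤ be a surjective homomorphism. Let a ∈ A ∪ A^{-1} be a letter with φ(a) maximal among all letters of A ∪ A^{-1}. Then the number d_k of good words of length k satisfies lim_{k→∞} d_k^{1/k} = 2m - 1. -/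
open Filter Topology

/-!
A good word stays reduced when the letter `a` is appended to it, so good words can be concatenated
and powers of one good word have arbitrarily large `φ`-value. At least half of the reduced words
`u` of length `n` have `φ u ≥ 0`, since `u ↦ u⁻¹` exchanges the signs. If there are at least two
generators, such a `u` can be completed to a good word `g c u c'`, where the letters `c` and `c'`
only prevent cancellation and `g` is a fixed good word with `φ g` large enough to absorb their
possibly negative `φ`-values; with one generator the good words are the positive powers of `a`.
Hence `d_k` agrees with `(2m - 1) ^ k` up to constant factors.
-/

section ReducedWords

variable {α : Type*}

lemma letter_ne_inv_iff {x y : α × Bool} : x ≠ (y.1, !y.2) ↔ (x.1 = y.1 → x.2 = y.2) := by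
  obtain ⟨i, s⟩ := x
  obtain ⟨j, t⟩ := y
  simp only [ne_eq, Prod.mk.injEq, not_and, Bool.eq_not, not_not]

lemma letter_ne_inv_comm {x y : α × Bool} : x ≠ (y.1, !y.2) ↔ y ≠ (x.1, !x.2) := by
  rw [letter_ne_inv_iff, letter_ne_inv_iff, eq_comm, @eq_comm _ x.2]

lemma isReduced_append_singleton_iff {w : List (α × Bool)} {x : α × Bool} :
    FreeGroup.IsReduced (w ++ [x]) ↔
      FreeGroup.IsReduced w ∧ w.getLast? ≠ some (x.1, !x.2) := by
  cases h : w.getLast? with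
  | none => simp [FreeGroup.IsReduced, List.isChain_append, h]
  | some y => simp [FreeGroup.IsReduced, List.isChain_append, h, ← letter_ne_inv_iff]

lemma isReduced_invRev {w : List (α × Bool)} (hw : FreeGroup.IsReduced w) :
    FreeGroup.IsReduced (FreeGroup.invRev w) := by
  classical
  exact .of_reduce_eq (by rw [FreeGroup.reduce_invRev, hw.reduce_eq])

lemma exists_isReduced_append_cons [Nontrivial α] {v w : List (α × Bool)}
    (hv : FreeGroup.IsReduced v) (hw : FreeGroup.IsReduced w) :
    ∃ c, FreeGroup.IsReduced (v ++ c :: w) := by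
  -- A generator other than that of `x`, with the sign of `y`, fits between `x` and `y`.
  have between (x y : α × Bool) :
      ∃ c : α × Bool, (x.1 = c.1 → x.2 = c.2) ∧ (c.1 = y.1 → c.2 = y.2) := by
    obtain ⟨i, hi⟩ := exists_ne x.1
    exact ⟨(i, y.2), fun h ↦ absurd h.symm hi, fun _ ↦ rfl⟩
  obtain ⟨i⟩ : Nonempty α := inferInstance
  obtain ⟨c, hvc, hcw⟩ := between (v.getLast?.getD (i, true)) (w.head?.getD (i, true))
  refine ⟨c, List.isChain_append.2
    ⟨hv, List.isChain_cons.2 ⟨fun y hy ↦ ?_, hw⟩, fun x hx y hy ↦ ?_⟩⟩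
  · rwa [Option.mem_def.1 hy] at hcw
  · obtain rfl : c = y := by simpa using hy
    rwa [Option.mem_def.1 hx] at hvc

lemma eq_of_mem_of_isReduced_cons [Subsingleton α] {w : List (α × Bool)} {x y : α × Bool}
    (hw : FreeGroup.IsReduced (x :: w)) (hy : y ∈ x :: w) : y = x := by
  have hchain : List.IsChain (· = ·) (x :: w) :=
    hw.imp fun _ _ h ↦ Prod.ext (Subsingleton.elim _ _) (h (Subsingleton.elim _ _))
  rw [List.isChain_cons_eq_iff_eq_replicate.1 hchain] at hy
  exact List.eq_of_mem_replicate (n := w.length + 1) hy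

/-- The words of length `n` that can follow the letter `x` in a reduced word. -/
def reducedExtensions (x : α × Bool) (n : ℕ) : Set (List (α × Bool)) :=
  {w | w.length = n ∧ FreeGroup.IsReduced (x :: w)}

lemma reducedExtensions_zero (x : α × Bool) : reducedExtensions x 0 = {[]} := by
  ext w
  simp +contextual [reducedExtensions, List.length_eq_zero_iff, iff_def]

lemma reducedExtensions_succ (x : α × Bool) (n : ℕ) :
    reducedExtensions x (n + 1) =
      ⋃ y : {y // y ≠ (x.1, !x.2)}, List.cons y.1 '' reducedExtensions y.1 n := by
  ext w
  cases w with
  | nil => simp [reducedExtensions]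
  | cons y v =>
    simp only [reducedExtensions, FreeGroup.isReduced_cons_cons, ← letter_ne_inv_iff,
      Set.mem_ofPred_eq, List.length_cons, Nat.add_right_cancel_iff, Set.mem_iUnion, Set.mem_image,
      List.cons.injEq, Subtype.exists, exists_prop, exists_eq_right_right]
    rw [letter_ne_inv_comm]
    exact and_left_comm

lemma reducedExtensions_finite [Finite α] (x : α × Bool) (n : ℕ) : (reducedExtensions x n).Finite :=
  (List.finite_length_eq _ n).subset fun _ h ↦ h.1

lemma ncard_reducedExtensions [Fintype α] (x : α × Bool) (n : ℕ) :
    (reducedExtensions x n).ncard = (2 * Fintype.card α - 1) ^ n := by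
  classical
  induction n generalizing x with
  | zero => simp [reducedExtensions_zero]
  | succ n ih =>
    have hdisj : Pairwise (Function.onFun Disjoint fun y : {y // y ≠ (x.1, !x.2)} ↦
        List.cons y.1 '' reducedExtensions y.1 n) := by
      intro y z hyz
      refine Set.disjoint_left.2 ?_
      rintro _ ⟨v, -, rfl⟩ ⟨v', -, h⟩
      exact hyz (Subtype.ext (List.cons.inj h).1.symm)
    have hfin (y : {y // y ≠ (x.1, !x.2)}) : (List.cons y.1 '' reducedExtensions y.1 n).Finite :=
      (reducedExtensions_finite y.1 n).image _
    rw [reducedExtensions_succ, Set.ncard_iUnion_of_finite hfin hdisj, finsum_eq_sum_of_fintype]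
    simp only [Set.ncard_image_of_injective _ List.cons_injective, ih, Finset.sum_const,
      Finset.card_univ, smul_eq_mul, Fintype.card_subtype_compl, Fintype.card_prod,
      Fintype.card_bool, Fintype.card_unique, pow_succ']
    rw [mul_comm (Fintype.card α)]

end ReducedWords

section Additive

lemma map_inv_eq_neg {H G : Type*} [Group H] [AddGroup G] {φ : H → G}
    (hφ : ∀ x y, φ (x * y) = φ x + φ y) (x : H) : φ x⁻¹ = -φ x :=
  map_neg (AddMonoidHom.mk' (M := Additive H) φ hφ) (Additive.ofMul x)

lemma map_mk_append {α G : Type*} [Add G] {φ : FreeGroup α → G}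
    (hφ : ∀ x y, φ (x * y) = φ x + φ y) (v w : List (α × Bool)) :
    φ (FreeGroup.mk (v ++ w)) = φ (FreeGroup.mk v) + φ (FreeGroup.mk w) := by
  rw [← hφ, FreeGroup.mul_mk]

/-- The reduced words of length `n` with nonnegative `φ`-value. -/
def nonnegReducedWords {α G : Type*} [Zero G] [LE G] (φ : FreeGroup α → G) (n : ℕ) :
    Set (List (α × Bool)) :=
  {w | w.length = n ∧ FreeGroup.IsReduced w ∧ 0 ≤ φ (FreeGroup.mk w)}

variable {α G : Type*} [AddCommGroup G] [LinearOrder G] [IsOrderedAddMonoid G]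
  {φ : FreeGroup α → G}

lemma exists_mem_map_mk_singleton_pos (hφ : ∀ x y, φ (x * y) = φ x + φ y)
    {w : List (α × Bool)} (hw : 0 < φ (FreeGroup.mk w)) :
    ∃ x ∈ w, 0 < φ (FreeGroup.mk [x]) := by
  contrapose! hw
  induction w with
  | nil => exact (map_zero (AddMonoidHom.mk' (M := Additive (FreeGroup α)) φ hφ)).le
  | cons x w ih =>
    rw [← List.singleton_append, map_mk_append hφ]
    exact add_nonpos (hw x (by simp)) (ih fun y hy ↦ hw y (by simp [hy]))

lemma map_mk_singleton_pos_of_forall_le (hφ : ∀ x y, φ (x * y) = φ x + φ y)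
    {a : α × Bool} (ha : ∀ ℓ : α × Bool, φ (FreeGroup.mk [ℓ]) ≤ φ (FreeGroup.mk [a]))
    {x : FreeGroup α} (hx : 0 < φ x) : 0 < φ (FreeGroup.mk [a]) := by
  obtain ⟨w, rfl⟩ := Quot.exists_rep x
  obtain ⟨ℓ, -, hℓ⟩ := exists_mem_map_mk_singleton_pos hφ hx
  exact hℓ.trans_le (ha ℓ)

lemma pow_le_two_mul_ncard_nonnegReducedWords [Fintype α] [Nonempty α]
    (hφ : ∀ x y, φ (x * y) = φ x + φ y) (n : ℕ) :
    (2 * Fintype.card α - 1) ^ n ≤ 2 * (nonnegReducedWords φ n).ncard := by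
  set S := nonnegReducedWords φ n
  have hS : S.Finite := (List.finite_length_eq _ n).subset fun _ h ↦ h.1
  obtain ⟨i⟩ := ‹Nonempty α›
  have hcover : reducedExtensions (i, true) n ⊆ S ∪ FreeGroup.invRev '' S := by
    rintro u ⟨hlen, hred⟩
    have hu : FreeGroup.IsReduced u := hred.infix (List.suffix_cons _ u).isInfix
    rcases le_total 0 (φ (FreeGroup.mk u)) with hpos | hneg
    · exact .inl ⟨hlen, hu, hpos⟩
    · refine .inr ⟨FreeGroup.invRev u, ⟨by simpa using hlen, isReduced_invRev hu, ?_⟩,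
        FreeGroup.invRev_invRev⟩
      rw [← FreeGroup.inv_mk, map_inv_eq_neg hφ]
      exact neg_nonneg.2 hneg
  calc (2 * Fintype.card α - 1) ^ n = (reducedExtensions (i, true) n).ncard :=
        (ncard_reducedExtensions _ n).symm
    _ ≤ (S ∪ FreeGroup.invRev '' S).ncard := Set.ncard_le_ncard hcover (hS.union (hS.image _))
    _ ≤ S.ncard + (FreeGroup.invRev '' S).ncard := Set.ncard_union_le _ _
    _ = 2 * S.ncard := by rw [Set.ncard_image_of_injective _ FreeGroup.invRev_injective, two_mul]

end Additive

namespace IsGoodWord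

variable {m : ℕ} {φ : FreeGroup (Fin m) → ℤ} {a : Fin m × Bool} {v w : List (Fin m × Bool)}

lemma iff_isReduced_append : IsGoodWord φ a w ↔
    FreeGroup.IsReduced (w ++ [a]) ∧ w.head? = some a ∧ 0 < φ (FreeGroup.mk w) := by
  rw [isReduced_append_singleton_iff, FreeGroup.isReduced_iff_reduce_eq]
  unfold IsGoodWord IsReducedWord
  tauto

lemma singleton (ha : 0 < φ (FreeGroup.mk [a])) : IsGoodWord φ a [a] :=
  iff_isReduced_append.2 ⟨by simp [FreeGroup.isReduced_cons_cons], rfl, ha⟩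

lemma append (hφ : ∀ x y, φ (x * y) = φ x + φ y) (hv : IsGoodWord φ a v)
    (hw : IsGoodWord φ a w) : IsGoodWord φ a (v ++ w) := by
  rw [iff_isReduced_append] at *
  obtain ⟨hv_red, hv_head, hv_pos⟩ := hv
  obtain ⟨hw_red, hw_head, hw_pos⟩ := hw
  obtain ⟨w, rfl⟩ := List.head?_eq_some_iff.1 hw_head
  refine ⟨?_, by simp [hv_head], ?_⟩
  · simpa using hv_red.append_overlap (L₃ := w ++ [a]) (by simpa using hw_red) (by simp)
  · rw [map_mk_append hφ]
    exact add_pos hv_pos hw_pos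

lemma exists_lt_map_mk (hφ : ∀ x y, φ (x * y) = φ x + φ y) (hw : IsGoodWord φ a w) (N : ℕ) :
    ∃ v, IsGoodWord φ a v ∧ N < φ (FreeGroup.mk v) := by
  induction N with
  | zero => exact ⟨w, hw, hw.2.2.2⟩
  | succ N ih =>
    obtain ⟨v, hv, hNv⟩ := ih
    refine ⟨v ++ w, hv.append hφ hw, ?_⟩
    have hw_pos := hw.2.2.2
    rw [map_mk_append hφ]
    push_cast
    linarith

lemma exists_completion [Nontrivial (Fin m)] (hφ : ∀ x y, φ (x * y) = φ x + φ y)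
    (hw : IsGoodWord φ a w) :
    ∃ g, ∀ u, FreeGroup.IsReduced u → 0 ≤ φ (FreeGroup.mk u) →
      ∃ c c', IsGoodWord φ a (g ++ c :: (u ++ [c'])) := by
  obtain ⟨M, hM⟩ := Finite.exists_le fun x : Fin m × Bool ↦ -φ (FreeGroup.mk [x])
  obtain ⟨g, hg, hMg⟩ := hw.exists_lt_map_mk hφ (2 * M).toNat
  refine ⟨g, fun u hu hu_nonneg ↦ ?_⟩
  obtain ⟨hg_red, hg_head, -⟩ := hg
  obtain ⟨c', hc'⟩ := exists_isReduced_append_cons hu (.singleton (a := a))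
  obtain ⟨c, hc⟩ := exists_isReduced_append_cons (.of_reduce_eq hg_red) hc'
  refine ⟨c, c', iff_isReduced_append.2 ⟨by simpa using hc, by simp [hg_head], ?_⟩⟩
  have hφ_split : φ (FreeGroup.mk (g ++ c :: (u ++ [c']))) =
      φ (FreeGroup.mk g) + (φ (FreeGroup.mk [c]) +
        (φ (FreeGroup.mk u) + φ (FreeGroup.mk [c']))) := by
    rw [← List.singleton_append, map_mk_append hφ, map_mk_append hφ, map_mk_append hφ]
  have := hM c
  have := hM c'
  have := Int.self_le_toNat (2 * M)
  linarith

lemma exists_length_eq_of_subsingleton [Subsingleton (Fin m)]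
    (hφ : ∀ x y, φ (x * y) = φ x + φ y) (hw : IsGoodWord φ a w) (n : ℕ) :
    ∃ v, v.length = n + 1 ∧ IsGoodWord φ a v := by
  have ha : IsGoodWord φ a [a] := by
    obtain ⟨hw_red, hw_head, -, hw_pos⟩ := hw
    obtain ⟨x, hx, hx_pos⟩ := exists_mem_map_mk_singleton_pos hφ hw_pos
    obtain ⟨w, rfl⟩ := List.head?_eq_some_iff.1 hw_head
    obtain rfl := eq_of_mem_of_isReduced_cons (.of_reduce_eq hw_red) hx
    exact singleton hx_pos
  induction n with
  | zero => exact ⟨[a], rfl, ha⟩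
  | succ n ih =>
    obtain ⟨v, hv_len, hv⟩ := ih
    exact ⟨v ++ [a], by simp [hv_len], hv.append hφ ha⟩

end IsGoodWord

section Counting

variable {m : ℕ} {φ : FreeGroup (Fin m) → ℤ} {a : Fin m × Bool} {w : List (Fin m × Bool)}

/-- The set `D_k` of good words of length `k`. -/
def goodWords (φ : FreeGroup (Fin m) → ℤ) (a : Fin m × Bool) (k : ℕ) :
    Set (List (Fin m × Bool)) :=
  {w | w.length = k ∧ IsGoodWord φ a w}

lemma goodWords_finite (k : ℕ) : (goodWords φ a k).Finite :=
  (List.finite_length_eq _ k).subset fun _ h ↦ h.1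

lemma ncard_goodWords_succ_le (n : ℕ) : (goodWords φ a (n + 1)).ncard ≤ (2 * m - 1) ^ n := by
  have hsub : goodWords φ a (n + 1) ⊆ List.cons a '' reducedExtensions a n := by
    rintro w ⟨hlen, hred, hhead, -⟩
    obtain ⟨v, rfl⟩ := List.head?_eq_some_iff.1 hhead
    exact ⟨v, ⟨by simpa using hlen, .of_reduce_eq hred⟩, rfl⟩
  calc (goodWords φ a (n + 1)).ncard ≤ (List.cons a '' reducedExtensions a n).ncard :=
        Set.ncard_le_ncard hsub ((reducedExtensions_finite a n).image _)
    _ = (2 * m - 1) ^ n := by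
        rw [Set.ncard_image_of_injective _ List.cons_injective, ncard_reducedExtensions,
          Fintype.card_fin]

lemma exists_ncard_nonnegReducedWords_le_ncard_goodWords [Nontrivial (Fin m)]
    (hφ : ∀ x y, φ (x * y) = φ x + φ y) (hw : IsGoodWord φ a w) :
    ∃ L, ∀ n, (nonnegReducedWords φ n).ncard ≤ (goodWords φ a (n + L)).ncard := by
  obtain ⟨g, hg⟩ := hw.exists_completion hφ
  choose! c c' hgood using hg
  refine ⟨g.length + 2, fun n ↦ Set.ncard_le_ncard_of_injOn
    (fun u ↦ g ++ c u :: (u ++ [c' u])) ?_ ?_ (goodWords_finite _)⟩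
  · rintro u ⟨rfl, hu, hu_nonneg⟩
    refine ⟨?_, hgood u hu hu_nonneg⟩
    simp only [List.length_append, List.length_cons, List.length_nil]
    omega
  · intro u _ u' _ h
    exact List.append_inj_left' (List.cons.inj (List.append_cancel_left h)).2 rfl

lemma exists_pow_le_two_mul_ncard_goodWords (hφ : ∀ x y, φ (x * y) = φ x + φ y)
    (hw : IsGoodWord φ a w) :
    ∃ L, ∀ n, (2 * m - 1) ^ n ≤ 2 * (goodWords φ a (n + L)).ncard := by
  have : Nonempty (Fin m) := ⟨a.1⟩
  rcases subsingleton_or_nontrivial (Fin m) with hsub | hnontriv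
  · obtain rfl : m = 1 := by
      have := Fin.subsingleton_iff_le_one.1 hsub
      have := a.1.pos
      omega
    refine ⟨1, fun n ↦ ?_⟩
    have : 0 < (goodWords φ a (n + 1)).ncard :=
      (Set.ncard_pos (goodWords_finite _)).2 (hw.exists_length_eq_of_subsingleton hφ n)
    calc (2 * 1 - 1) ^ n = 1 := one_pow n
      _ ≤ 2 * (goodWords φ a (n + 1)).ncard := by omega
  · obtain ⟨L, hL⟩ := exists_ncard_nonnegReducedWords_le_ncard_goodWords hφ hw
    refine ⟨L, fun n ↦ ?_⟩
    have hhalf := pow_le_two_mul_ncard_nonnegReducedWords hφ n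
    rw [Fintype.card_fin] at hhalf
    exact hhalf.trans (Nat.mul_le_mul_left 2 (hL n))

end Counting

lemma tendsto_const_mul_pow_rpow_one_div {c q : ℝ} (hc : 0 < c) (hq : 0 ≤ q) :
    Tendsto (fun k : ℕ ↦ (c * q ^ k) ^ (1 / (k : ℝ))) atTop (𝓝 q) := by
  have hlim : Tendsto (fun k : ℕ ↦ c ^ (1 / (k : ℝ)) * q) atTop (𝓝 q) := by
    simpa using ((Real.continuousAt_const_rpow hc.ne').tendsto.comp
      tendsto_one_div_atTop_nhds_zero_nat).mul_const q
  refine hlim.congr' ?_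
  filter_upwards [eventually_ne_atTop 0] with k hk
  rw [Real.mul_rpow hc.le (pow_nonneg hq k), one_div, Real.pow_rpow_inv_natCast hq hk]

lemma tendsto_rpow_one_div_of_le_of_le {f : ℕ → ℝ} {c C q : ℝ} (hc : 0 < c) (hC : 0 < C)
    (hq : 0 ≤ q) (hlower : ∀ᶠ k in atTop, c * q ^ k ≤ f k)
    (hupper : ∀ᶠ k in atTop, f k ≤ C * q ^ k) :
    Tendsto (fun k : ℕ ↦ f k ^ (1 / (k : ℝ))) atTop (𝓝 q) := by
  refine tendsto_of_tendsto_of_tendsto_of_le_of_le' (tendsto_const_mul_pow_rpow_one_div hc hq)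
    (tendsto_const_mul_pow_rpow_one_div hC hq) ?_ ?_
  · filter_upwards [hlower] with k hk
    exact Real.rpow_le_rpow (by positivity) hk (by positivity)
  · filter_upwards [hlower, hupper] with k hk hk'
    exact Real.rpow_le_rpow (le_trans (by positivity) hk) hk' (by positivity)

theorem good_words_count_root_tendsto_general {m : ℕ} {φ : FreeGroup (Fin m) → ℤ}
    (hφ : ∀ x y, φ (x * y) = φ x + φ y) {a : Fin m × Bool}
    {w : List (Fin m × Bool)} (hw : IsGoodWord φ a w) :
    Tendsto (fun k : ℕ ↦ ((goodWords φ a k).ncard : ℝ) ^ (1 / (k : ℝ))) atTop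
      (𝓝 (2 * (m : ℝ) - 1)) := by
  obtain ⟨L, hL⟩ := exists_pow_le_two_mul_ncard_goodWords hφ hw
  have hm : 1 ≤ m := a.1.pos
  have hcast : 2 * (m : ℝ) - 1 = ((2 * m - 1 : ℕ) : ℝ) := by
    push_cast [Nat.cast_sub (by omega : 1 ≤ 2 * m)]
    rfl
  have hq : (0 : ℝ) < ((2 * m - 1 : ℕ) : ℝ) := by
    exact_mod_cast (by omega : 0 < 2 * m - 1)
  rw [hcast]
  set q : ℝ := ((2 * m - 1 : ℕ) : ℝ) with hq_def
  refine tendsto_rpow_one_div_of_le_of_le (c := (2 * q ^ L)⁻¹) (C := q⁻¹) (by positivity)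
    (by positivity) hq.le ?_ ?_
  · filter_upwards [eventually_ge_atTop L] with k hk
    obtain ⟨n, rfl⟩ := Nat.exists_eq_add_of_le' hk
    have hn : q ^ n ≤ 2 * (goodWords φ a (n + L)).ncard := by
      rw [hq_def]
      exact_mod_cast hL n
    rw [inv_mul_le_iff₀ (by positivity)]
    calc q ^ (n + L) = q ^ n * q ^ L := pow_add q n L
      _ ≤ 2 * (goodWords φ a (n + L)).ncard * q ^ L := by gcongr
      _ = 2 * q ^ L * (goodWords φ a (n + L)).ncard := by ring
  · filter_upwards [eventually_ge_atTop 1] with k hk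
    obtain ⟨n, rfl⟩ := Nat.exists_eq_add_of_le' hk
    rw [le_inv_mul_iff₀ hq, pow_succ', mul_le_mul_iff_right₀ hq, hq_def]
    exact_mod_cast ncard_goodWords_succ_le n

/-- Lemma 1, second part. With `d_k` the number of good words of
length `k`, one has `lim_{k→∞} d_k^{1/k} = 2m - 1`. -/
theorem good_words_count_root_tendsto (m : ℕ) (hm : 2 ≤ m)
    (φ : FreeGroup (Fin m) → ℤ)
    (hφ : ∀ x y : FreeGroup (Fin m), φ (x * y) = φ x + φ y)
    (hsurj : Function.Surjective φ)
    (a : Fin m × Bool)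
    (ha : ∀ ℓ : Fin m × Bool, φ (FreeGroup.mk [ℓ]) ≤ φ (FreeGroup.mk [a])) :
    Filter.Tendsto
      (fun k : ℕ =>
        ((Set.ncard {w : List (Fin m × Bool) | w.length = k ∧ IsGoodWord φ a w} : ℝ))
          ^ (1 / (k : ℝ)))
      Filter.atTop (nhds (2 * (m : ℝ) - 1)) := by
  obtain ⟨x, hx⟩ := hsurj 1
  have ha_pos := map_mk_singleton_pos_of_forall_le hφ ha (hx ▸ one_pos : 0 < φ x)
  exact good_words_count_root_tendsto_general hφ (.singleton ha_pos)
end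

section
/- Let m ≥ 2, let F_m be a free group with free basis A of size m, let φ : F_m → ℤ be a surjective homomorphism, let a ∈ A ∪ A^{-1} be a letter with φ(a) maximal among all letters of A ∪ A^{-1}, and set C = φ(a). Let R be a normal subgroup of F_m contained in the kernel of φ, and suppose k ≥ 2 satisfies ρ(R) > Ck(2k-3) + 2k - 2, where ρ(R) is the length of the shortest nontrivial element of R. Then any path in the Cayley graph of F_m/R (with respect to the images of A) labelled by a word of the form g₁g₂⋯g_t, where t ≥ 1 and each g_s is a good word of length k, is self-avoiding. -/
/-!
Give each letter `x` the weight `1 - k * φ x`, so that a word `v` has total weight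
`|v| - k * φ v`. A good word of length `k` has weight at most `0`, since `φ` takes a value `≥ 1`
on it, and any subword of it has weight at most `(k - 1) * (1 + k * C)`. A prefix of it even has
weight at most `1 + (k - 2) * (1 + k * C)`, because its first letter `a` has weight at most `1`.
A subword `v` of `g₁g₂⋯g_t` consists of a suffix of a good word, some full good words and a
prefix of a good word, unless it lies inside one `g_s`; so its weight is at most the sum of the
two bounds, which is `C * k * (2k - 3) + 2k - 2`.

If two vertices of the path coincide, then the subword `v` between them represents an element of
`R ≤ ker φ`, so its weight is `|v|`; as `g₁g₂⋯g_t` is freely reduced, `|v|` is also the norm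
of that element, contradicting the bound on `ρ(R)`.
-/

open Filter Topology

/-- The path in the Cayley graph of `F_m/R` (w.r.t. the images of the free basis)
starting at the identity and labelled by the word `w` is *self-avoiding*: the vertices
it visits, i.e. the images in `F_m/R` of the prefixes of `w`, are pairwise distinct. -/
def SelfAvoiding {m : ℕ} (R : Subgroup (FreeGroup (Fin m)))
    (w : List (Fin m × Bool)) : Prop :=
  ∀ i j : ℕ, i ≤ w.length → j ≤ w.length →
    (QuotientGroup.mk (FreeGroup.mk (w.take i)) : FreeGroup (Fin m) ⧸ R) =
      QuotientGroup.mk (FreeGroup.mk (w.take j)) → i = j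

section WeightedWords

variable {β M : Type*} [AddCommMonoid M] [PartialOrder M] [IsOrderedAddMonoid M] {ω : β → M}
  {L : List (List β)} {g u v : List β} {b B P S : M}

theorem sum_map_le_of_prefix_flatten (hP : 0 ≤ P) (hsum : ∀ g ∈ L, (g.map ω).sum ≤ 0)
    (hprefix : ∀ g ∈ L, ∀ u, u <+: g → (u.map ω).sum ≤ P) (hv : v <+: L.flatten) :
    (v.map ω).sum ≤ P := by
  induction L generalizing v with
  | nil => simpa [List.prefix_nil.1 hv] using hP
  | cons g L ih =>
    simp only [List.forall_mem_cons] at hsum hprefix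
    obtain ⟨t, ht⟩ := hv
    rw [List.flatten_cons, List.append_eq_append_iff] at ht
    obtain ⟨s, hg, -⟩ | ⟨v', rfl, hL⟩ := ht
    · exact hprefix.1 v ⟨s, hg.symm⟩
    · rw [List.map_append, List.sum_append]
      exact add_le_of_nonpos_of_le hsum.1 (ih hsum.2 hprefix.2 ⟨t, hL.symm⟩)

theorem sum_map_le_of_infix_flatten (hS : 0 ≤ S) (hP : 0 ≤ P)
    (hsum : ∀ g ∈ L, (g.map ω).sum ≤ 0)
    (hinfix : ∀ g ∈ L, ∀ u, u <:+: g → (u.map ω).sum ≤ S)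
    (hprefix : ∀ g ∈ L, ∀ u, u <+: g → (u.map ω).sum ≤ P) (hv : v <:+: L.flatten) :
    (v.map ω).sum ≤ S + P := by
  induction L with
  | nil => simpa [List.infix_nil.1 hv] using add_nonneg hS hP
  | cons g L ih =>
    simp only [List.forall_mem_cons] at hsum hinfix hprefix
    rw [List.flatten_cons, List.infix_append_iff] at hv
    obtain hg | hL | ⟨u, w, rfl, hu, hw⟩ := hv
    · exact le_add_of_le_of_nonneg (hinfix.1 v hg) hP
    · exact ih hsum.2 hinfix.2 hprefix.2 hL
    · rw [List.map_append, List.sum_append]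
      exact add_le_add (hinfix.1 u hu.isInfix)
        (sum_map_le_of_prefix_flatten hP hsum.2 hprefix.2 hw)

theorem sum_map_le_of_infix (hB : 0 ≤ B) (hω : ∀ x, ω x ≤ B) (hg : (g.map ω).sum ≤ 0)
    (hu : u <:+: g) : (u.map ω).sum ≤ (g.length - 1) • B := by
  obtain hlen | hlen := hu.length_le.eq_or_lt
  · rw [hu.eq_of_length hlen]
    exact hg.trans (nsmul_nonneg hB _)
  · calc (u.map ω).sum ≤ u.length • B := by
          simpa using List.sum_le_card_nsmul (u.map ω) B (by simp [hω])
      _ ≤ (g.length - 1) • B := nsmul_le_nsmul_left hB (by lia)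

theorem sum_map_le_of_prefix (hB : 0 ≤ B) (hb : 0 ≤ b) (hω : ∀ x, ω x ≤ B)
    (hhead : ∀ x ∈ g.head?, ω x ≤ b) (hg : (g.map ω).sum ≤ 0) (hu : u <+: g) :
    (u.map ω).sum ≤ b + (g.length - 2) • B := by
  have hbound_nonneg : 0 ≤ b + (g.length - 2) • B := add_nonneg hb (nsmul_nonneg hB _)
  obtain hlen | hlen := hu.length_le.eq_or_lt
  · rw [hu.eq_of_length hlen]
    exact hg.trans hbound_nonneg
  obtain _ | ⟨x, t⟩ := u
  · simpa using hbound_nonneg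
  have hx : ω x ≤ b := hhead x (by obtain ⟨s, rfl⟩ := hu; rfl)
  have ht : (t.map ω).sum ≤ t.length • B := by
    simpa using List.sum_le_card_nsmul (t.map ω) B (by simp [hω])
  rw [List.length_cons] at hlen
  rw [List.map_cons, List.sum_cons]
  exact add_le_add hx (ht.trans (nsmul_le_nsmul_left hB (by lia)))

end WeightedWords

theorem length_le_of_infix_flatten {β : Type*} {h : β → ℤ} {C : ℤ} {k : ℕ}
    {L : List (List β)} {v : List β} (hk : 2 ≤ k) (hC : 0 ≤ C) (hh : ∀ x, -C ≤ h x)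
    (hlen : ∀ g ∈ L, g.length = k) (hhead : ∀ g ∈ L, ∀ x ∈ g.head?, 0 ≤ h x)
    (hpos : ∀ g ∈ L, 0 < (g.map h).sum) (hv : v <:+: L.flatten) :
    (v.length : ℤ) ≤ k * (v.map h).sum + (C * k * (2 * k - 3) + 2 * k - 2) := by
  let ω : β → ℤ := fun x => 1 - k * h x
  have hω_sum (w : List β) : (w.map ω).sum = w.length - k * (w.map h).sum := by
    induction w with
    | nil => simp
    | cons x w ih => simp only [List.map_cons, List.sum_cons, List.length_cons, ih, ω]; grind
  have hB : 0 ≤ 1 + k * C := by positivity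
  have hω (x : β) : ω x ≤ 1 + k * C := by
    have := mul_le_mul_of_nonneg_left (hh x) (Nat.cast_nonneg (α := ℤ) k)
    grind
  have hω_head (g) (hg : g ∈ L) (x) (hx : x ∈ g.head?) : ω x ≤ 1 :=
    sub_le_self 1 (mul_nonneg k.cast_nonneg (hhead g hg x hx))
  have hω_block (g) (hg : g ∈ L) : (g.map ω).sum ≤ 0 := by
    rw [hω_sum, hlen g hg]
    exact sub_nonpos.2 (le_mul_of_one_le_right k.cast_nonneg (hpos g hg))
  have hω_v : (v.map ω).sum ≤ (k - 1) • (1 + k * C) + (1 + (k - 2) • (1 + k * C)) := by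
    refine sum_map_le_of_infix_flatten (by positivity) (by positivity) hω_block
      (fun g hg u hu => ?_) (fun g hg u hu => ?_) hv
    · simpa only [hlen g hg] using sum_map_le_of_infix hB hω (hω_block g hg) hu
    · simpa only [hlen g hg] using
        sum_map_le_of_prefix hB zero_le_one hω (hω_head g hg) (hω_block g hg) hu
  rw [hω_sum, nsmul_eq_mul, nsmul_eq_mul, Nat.cast_sub hk, Nat.cast_sub (by lia)] at hω_v
  push_cast at hω_v
  linarith

section AdditiveMap

variable {G H : Type*} [Group G] [AddGroup H] {φ : G → H}

theorem map_one_of_map_mul (hφ : ∀ x y, φ (x * y) = φ x + φ y) : φ 1 = 0 :=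
  map_one (MonoidHom.mk' (G := Multiplicative H) φ hφ)

theorem map_inv_of_map_mul (hφ : ∀ x y, φ (x * y) = φ x + φ y) (x : G) : φ x⁻¹ = -φ x :=
  map_inv (MonoidHom.mk' (G := Multiplicative H) φ hφ) x

end AdditiveMap

section FreeGroup

variable {α : Type*}

theorem norm_mk_of_isReduced [DecidableEq α] {w : List (α × Bool)} (hw : FreeGroup.IsReduced w) :
    (FreeGroup.mk w).norm = w.length := by
  rw [FreeGroup.norm, FreeGroup.toWord_mk, hw.reduce_eq]

theorem isReduced_flatten {a : α × Bool} {L : List (List (α × Bool))}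
    (hred : ∀ g ∈ L, FreeGroup.IsReduced g) (hhead : ∀ g ∈ L, g.head? = some a)
    (hlast : ∀ g ∈ L, g.getLast? ≠ some (a.1, !a.2)) : FreeGroup.IsReduced L.flatten := by
  have hnil : [] ∉ L := fun h => by simpa using hhead [] h
  refine (List.isChain_flatten hnil).2
    ⟨hred, (List.pairwise_of_forall_mem_list fun g hg g' hg' x hx y hy hxy => ?_).isChain⟩
  obtain rfl : a = y := by simpa [hhead g' hg'] using hy
  by_contra hne
  exact hlast g hg (hx.trans (congrArg some (Prod.ext hxy (Bool.eq_not.2 hne))))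

theorem injOn_mk_take_of_forall_infix {R : Subgroup (FreeGroup α)} {w : List (α × Bool)}
    (hw : ∀ v, v <:+: w → FreeGroup.mk v ∈ R → v = []) :
    Set.InjOn (fun i => (FreeGroup.mk (w.take i) : FreeGroup α ⧸ R)) (Set.Iic w.length) := by
  intro i hi j hj hij
  wlog hle : i ≤ j generalizing i j
  · exact (this hj hi hij.symm (by lia)).symm
  have hsplit : w.take j = w.take i ++ (w.drop i).take (j - i) := by
    rw [← List.take_add, Nat.add_sub_cancel' hle]
  have hmem : FreeGroup.mk ((w.drop i).take (j - i)) ∈ R := by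
    have := QuotientGroup.eq.1 hij
    rwa [hsplit, ← FreeGroup.mul_mk, inv_mul_cancel_left] at this
  have hnil := hw _ ((List.take_prefix _ _).isInfix.trans (List.drop_suffix _ _).isInfix) hmem
  simp only [List.take_eq_nil_iff, List.drop_eq_nil_iff, Set.mem_Iic] at hnil hi hj
  lia

theorem map_mk_eq_sum {H : Type*} [AddGroup H] {φ : FreeGroup α → H}
    (hφ : ∀ x y, φ (x * y) = φ x + φ y) (w : List (α × Bool)) :
    φ (FreeGroup.mk w) = (w.map fun x => φ (FreeGroup.mk [x])).sum := by
  induction w with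
  | nil => exact map_one_of_map_mul hφ
  | cons x w ih =>
    rw [← List.singleton_append, ← FreeGroup.mul_mk, hφ, ih, List.map_append, List.sum_append,
      List.map_singleton, List.sum_singleton]

theorem concatenation_of_good_words_self_avoiding_general [DecidableEq α] {k : ℕ} (hk : 2 ≤ k)
    {φ : FreeGroup α → ℤ} (hφ : ∀ x y, φ (x * y) = φ x + φ y) {a : α × Bool}
    (ha : ∀ x, φ (FreeGroup.mk [x]) ≤ φ (FreeGroup.mk [a])) {R : Subgroup (FreeGroup α)}
    (hker : ∀ g ∈ R, φ g = 0)
    (hρ : ∀ g ∈ R, g ≠ 1 →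
      φ (FreeGroup.mk [a]) * k * (2 * (k : ℤ) - 3) + 2 * k - 2 < (FreeGroup.norm g : ℤ))
    {gs : List (List (α × Bool))} (hlen : ∀ g ∈ gs, g.length = k)
    (hred : ∀ g ∈ gs, FreeGroup.IsReduced g) (hhead : ∀ g ∈ gs, g.head? = some a)
    (hlast : ∀ g ∈ gs, g.getLast? ≠ some (a.1, !a.2)) (hpos : ∀ g ∈ gs, 0 < φ (FreeGroup.mk g)) :
    Set.InjOn (fun i => (FreeGroup.mk (gs.flatten.take i) : FreeGroup α ⧸ R))
      (Set.Iic gs.flatten.length) := by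
  refine injOn_mk_take_of_forall_infix fun v hv hvR => ?_
  have hnorm : (FreeGroup.mk v).norm = v.length :=
    norm_mk_of_isReduced ((isReduced_flatten hred hhead hlast).infix hv)
  have hletter (x : α × Bool) : -φ (FreeGroup.mk [a]) ≤ φ (FreeGroup.mk [x]) :=
    neg_le.1 (map_inv_of_map_mul hφ (FreeGroup.mk [x]) ▸ ha (x.1, !x.2))
  have hC : 0 ≤ φ (FreeGroup.mk [a]) := neg_le_self_iff.1 (hletter a)
  have hshort := length_le_of_infix_flatten hk hC hletter hlen
    (fun g hg x hx => Option.some.inj ((hhead g hg).symm.trans hx) ▸ hC)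
    (fun g hg => map_mk_eq_sum hφ g ▸ hpos g hg) hv
  rw [← map_mk_eq_sum hφ, hker _ hvR, mul_zero, zero_add, ← hnorm] at hshort
  by_contra hne
  have hmk : FreeGroup.mk v ≠ 1 := by
    rwa [ne_eq, ← FreeGroup.norm_eq_zero, hnorm, List.length_eq_zero_iff]
  exact (hρ _ hvR hmk).not_ge hshort

end FreeGroup

/-- Lemma 2. Let `R ⊴ F_m` be contained in the kernel of the surjective
homomorphism `φ : F_m → ℤ`, let `a` be a letter of maximal `φ`-value, `C = φ(a)`, and let
`k ≥ 2` be such that every nontrivial element of `R` has length `> Ck(2k-3) + 2k - 2`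
(i.e. `ρ(R) > Ck(2k-3) + 2k - 2`). Then any path in the Cayley graph of `F_m/R` labelled
by a word `g₁g₂⋯g_t` (`t ≥ 1`, each `g_s` a good word of length `k`) is self-avoiding. -/
theorem concatenation_of_good_words_self_avoiding (m k : ℕ) (hm : 2 ≤ m) (hk : 2 ≤ k)
    (φ : FreeGroup (Fin m) → ℤ)
    (hφ : ∀ x y : FreeGroup (Fin m), φ (x * y) = φ x + φ y)
    (hsurj : Function.Surjective φ)
    (a : Fin m × Bool)
    (ha : ∀ ℓ : Fin m × Bool, φ (FreeGroup.mk [ℓ]) ≤ φ (FreeGroup.mk [a]))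
    (R : Subgroup (FreeGroup (Fin m))) [R.Normal]
    (hker : ∀ g ∈ R, φ g = 0)
    (hρ : ∀ g ∈ R, g ≠ 1 →
      φ (FreeGroup.mk [a]) * k * (2 * (k : ℤ) - 3) + 2 * k - 2 < (FreeGroup.norm g : ℤ))
    (gs : List (List (Fin m × Bool))) (hne : gs ≠ [])
    (hgood : ∀ g ∈ gs, g.length = k ∧ IsGoodWord φ a g) :
    SelfAvoiding R gs.flatten := by
  choose hlen hred hhead hlast hpos using hgood
  exact fun _ _ hi hj hij => concatenation_of_good_words_self_avoiding_general hk hφ ha hker hρ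
    hlen (fun g hg => .of_reduce_eq (hred g hg)) hhead hlast hpos hi hj hij
end
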